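/- Let n ≥ 2, let κ ∈ ℝⁿ lie in the Gårding cone Γ₂, and let μ ∈ ℝⁿ be arbitrary. Then σ_{1,1}(κ, μ)² ≥ σ₂(κ) · σ₂(μ); equivalently, the quadratic polynomial t ↦ σ₂(μ + tκ) has only real roots (σ₂ is hyperbolic with respect to every direction in Γ₂). -/

import Mathlib

open Finset

/-- First elementary symmetric polynomial: σ₁(κ) = ∑ i, κ i. -/
noncomputable def sigma1 {n : ℕ} (κ : Fin n → ℝ) : ℝ := ∑ i, κ i

/-- Second elementary symmetric polynomial: σ₂(κ) = ∑_{i<j} κ i * κ j. -/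
noncomputable def sigma2 {n : ℕ} (κ : Fin n → ℝ) : ℝ :=
  ∑ p ∈ Finset.univ.filter (fun p : Fin n × Fin n => p.1 < p.2), κ p.1 * κ p.2

/-- Polarization of σ₂: σ_{1,1}(κ, μ) = (1/2)(σ₁(κ)σ₁(μ) − ∑ i, κ i * μ i). -/
noncomputable def sigma11 {n : ℕ} (κ μ : Fin n → ℝ) : ℝ :=
  (1 / 2) * (sigma1 κ * sigma1 μ - ∑ i, κ i * μ i)

/-!
Since `t ↦ σ₂(μ + tκ)` is quadratic with leading coefficient `σ₂(κ) ≥ 0`, its discriminant is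
nonnegative as soon as it takes a nonpositive value. If `σ₁(κ) ≠ 0`, some `t` makes
`σ₁(μ + tκ) = 0`, and on the hyperplane `σ₁ = 0` we have `2σ₂(x) = -∑ xᵢ² ≤ 0`.
-/

theorem mul_le_sq_of_quadratic_nonpos {R : Type*} [CommRing R] [LinearOrder R]
    [IsStrictOrderedRing R] {a b c t : R} (ha : 0 ≤ a) (ht : c + 2 * t * b + t ^ 2 * a ≤ 0) :
    a * c ≤ b ^ 2 := by
  have complete_square :
      b ^ 2 - a * c = (a * t + b) ^ 2 + a * -(c + 2 * t * b + t ^ 2 * a) := by ring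
  have nonneg : 0 ≤ (a * t + b) ^ 2 + a * -(c + 2 * t * b + t ^ 2 * a) :=
    add_nonneg (sq_nonneg _) (mul_nonneg ha (neg_nonneg.mpr ht))
  exact sub_nonneg.mp (complete_square ▸ nonneg)

theorem sq_sum_eq_sum_sq_add_two_mul_sum_lt {ι R : Type*} [Fintype ι] [LinearOrder ι]
    [CommSemiring R] (f : ι → R) :
    (∑ i, f i) ^ 2 = ∑ i, f i ^ 2 + 2 * ∑ p : ι × ι with p.1 < p.2, f p.1 * f p.2 := by
  have diagonal : ∑ i, f i ^ 2 = ∑ i, ∑ j, if i = j then f i * f j else 0 := by simp [sq]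
  have upper : ∑ p : ι × ι with p.1 < p.2, f p.1 * f p.2 =
      ∑ i, ∑ j, if i < j then f i * f j else 0 := by
    rw [sum_filter, Fintype.sum_prod_type]
  have lower : ∑ p : ι × ι with p.1 < p.2, f p.1 * f p.2 =
      ∑ i, ∑ j, if j < i then f i * f j else 0 := by
    rw [upper, sum_comm]
    simp only [mul_comm]
  rw [two_mul, sq, sum_mul_sum, diagonal]
  nth_rw 1 [upper]
  rw [lower]
  simp only [← sum_add_distrib]
  refine sum_congr rfl fun i _ ↦ sum_congr rfl fun j _ ↦ ?_
  rcases lt_trichotomy i j with h | h | h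
  · simp [h, h.ne, h.not_gt]
  · simp [h]
  · simp [h, h.ne', h.not_gt]

section

variable {n : ℕ} (κ μ : Fin n → ℝ) (t : ℝ)

theorem two_mul_sigma2 : 2 * sigma2 κ = sigma1 κ ^ 2 - ∑ i, κ i ^ 2 := by
  rw [sigma1, sq_sum_eq_sum_sq_add_two_mul_sum_lt, sigma2]
  ring

theorem sigma1_add_smul : sigma1 (μ + t • κ) = sigma1 μ + t * sigma1 κ := by
  simp [sigma1, sum_add_distrib, mul_sum]

theorem sigma2_add_smul :
    sigma2 (μ + t • κ) = sigma2 μ + 2 * t * sigma11 κ μ + t ^ 2 * sigma2 κ := by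
  have sum_sq : ∑ i, (μ + t • κ) i ^ 2 =
      ∑ i, μ i ^ 2 + 2 * t * ∑ i, κ i * μ i + t ^ 2 * ∑ i, κ i ^ 2 := by
    simp only [mul_sum, ← sum_add_distrib, Pi.add_apply, Pi.smul_apply, smul_eq_mul]
    exact sum_congr rfl fun i _ ↦ by ring
  have expansion := two_mul_sigma2 (μ + t • κ)
  rw [sigma1_add_smul, sum_sq] at expansion
  rw [sigma11]
  linear_combination (expansion - two_mul_sigma2 μ - t ^ 2 * two_mul_sigma2 κ) / 2

variable {κ}

theorem sigma2_nonpos_of_sigma1_eq_zero (hκ : sigma1 κ = 0) : sigma2 κ ≤ 0 := by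
  have two_mul_eq : 2 * sigma2 κ = -∑ i, κ i ^ 2 := by simp [two_mul_sigma2, hκ]
  have sum_sq_nonneg : 0 ≤ ∑ i, κ i ^ 2 := sum_nonneg fun i _ ↦ sq_nonneg (κ i)
  linarith

theorem exists_sigma2_add_smul_nonpos (hκ : sigma1 κ ≠ 0) : ∃ t : ℝ, sigma2 (μ + t • κ) ≤ 0 := by
  refine ⟨-sigma1 μ / sigma1 κ, sigma2_nonpos_of_sigma1_eq_zero ?_⟩
  rw [sigma1_add_smul, div_mul_cancel₀ _ hκ, add_neg_cancel]

end

theorem sigma2_hyperbolic_general {n : ℕ} (κ μ : Fin n → ℝ) (hκ : 0 ≤ sigma2 κ) :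
    sigma2 κ * sigma2 μ ≤ sigma11 κ μ ^ 2 := by
  by_cases hσ : sigma1 κ = 0
  · have sigma2_eq_zero : sigma2 κ = 0 := (sigma2_nonpos_of_sigma1_eq_zero hσ).antisymm hκ
    rw [sigma2_eq_zero, zero_mul]
    exact sq_nonneg _
  · obtain ⟨t, ht⟩ := exists_sigma2_add_smul_nonpos μ hσ
    rw [sigma2_add_smul] at ht
    exact mul_le_sq_of_quadratic_nonpos hκ ht

/-- Hyperbolicity of σ₂ in directions of Γ₂: for κ ∈ Γ₂ and arbitrary μ,
    σ_{1,1}(κ, μ)² ≥ σ₂(κ)·σ₂(μ). -/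
theorem sigma2_hyperbolic {n : ℕ} (hn : 2 ≤ n) (κ μ : Fin n → ℝ)
    (hκ1 : sigma1 κ > 0) (hκ2 : sigma2 κ > 0) :
    sigma11 κ μ ^ 2 ≥ sigma2 κ * sigma2 μ :=
  sigma2_hyperbolic_general κ μ hκ2.le
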